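/- Let X be a Hausdorff topological space with a continuous action of ℂ* = ℂ∖{0} having only finitely many fixed points and such that every point of X converges, as η → 0, to some fixed point. Let G be a finite group acting on X by homeomorphisms, with the G-action commuting with the ℂ*-action. Let Y = X/G with the quotient topology and the induced ℂ*-action, and let π : X → Y be the quotient map. On the fixed points of X (respectively of Y), let ≺ be the reflexive-transitive closure of the relation x ≺₀ x' ⟺ cl(X_x) ∩ X_{x'} ≠ ∅ (respectively y ≺₀ y' ⟺ cl(Y_y) ∩ Y_{y'} ≠ ∅). Then for any fixed points x, x' of X: π(x) ≺ π(x') if and only if there exists g ∈ G with x ≺ g·x'. -/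

import Mathlib

open Filter Topology

/-- The filter of punctured neighbourhoods of `0` in `ℂ`, restricted to `ℂ*`. -/
noncomputable def zeroFilter : Filter ℂˣ := Filter.comap (Units.val) (𝓝[≠] (0 : ℂ))

/-- A point is fixed if it is fixed by every `η ∈ ℂ*`. -/
def IsCFixed {X : Type*} [MulAction ℂˣ X] (x : X) : Prop := ∀ η : ℂˣ, η • x = x

/-- The attracting set of a point `x₀` : the points converging to `x₀` as `η → 0`. -/
noncomputable def attractSet (X : Type*) [TopologicalSpace X] [MulAction ℂˣ X] (x₀ : X) :
    Set X :=
  {x | Filter.Tendsto (fun η : ℂˣ => η • x) zeroFilter (𝓝 x₀)}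

/-- The one-step relation `x ≺₀ x'` on fixed points : `cl(X_x) ∩ X_{x'} ≠ ∅`. -/
noncomputable def precRel (X : Type*) [TopologicalSpace X] [MulAction ℂˣ X]
    (a b : X) : Prop :=
  IsCFixed a ∧ IsCFixed b ∧ (closure (attractSet X a) ∩ attractSet X b).Nonempty

section Quot

variable {X : Type*} [TopologicalSpace X] [MulAction ℂˣ X]
variable (G : Type*) [Group G] [MulAction G X] [SMulCommClass ℂˣ G X]

/-- Since the `G`-action commutes with the `ℂ*`-action, the `ℂ*`-action descends
to the quotient `X/G`. -/
noncomputable def qsmul (η : ℂˣ) :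
    Quotient (MulAction.orbitRel G X) → Quotient (MulAction.orbitRel G X) :=
  Quotient.map (fun x => η • x) (by
    intro a b hab
    obtain ⟨g, rfl⟩ := hab
    exact ⟨g, (smul_comm η g b).symm⟩)

/-- Fixed points of `X/G` under the induced `ℂ*`-action. -/
def qIsFixed (y : Quotient (MulAction.orbitRel G X)) : Prop :=
  ∀ η : ℂˣ, qsmul G η y = y

/-- Attracting sets in `X/G` under the induced `ℂ*`-action, for the quotient topology. -/
noncomputable def qAttract (y₀ : Quotient (MulAction.orbitRel G X)) :
    Set (Quotient (MulAction.orbitRel G X)) :=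
  {y | Filter.Tendsto (fun η : ℂˣ => qsmul G η y) zeroFilter (𝓝 y₀)}

/-- The one-step relation on fixed points of `X/G`. -/
noncomputable def qPrecRel (a b : Quotient (MulAction.orbitRel G X)) : Prop :=
  qIsFixed G a ∧ qIsFixed G b ∧ (closure (qAttract G a) ∩ qAttract G b).Nonempty

theorem aux_zeroFilter_neBot : zeroFilter.NeBot := by
  unfold zeroFilter
  refine Filter.NeBot.comap_of_range_mem inferInstance ?_
  filter_upwards [self_mem_nhdsWithin] with z hz
  exact ⟨Units.mk0 z hz, rfl⟩

theorem aux_fixed_smul {a : X} (ha : IsCFixed a) (g : G) : IsCFixed (g • a) := by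
  intro η
  rw [smul_comm, ha η]

theorem aux_attract_smul (hGcont : ∀ g : G, Continuous (fun x : X => g • x))
    {a u : X} (g : G) (hu : u ∈ attractSet X a) : g • u ∈ attractSet X (g • a) := by
  have h1 : Tendsto (fun η : ℂˣ => g • (η • u)) zeroFilter (𝓝 (g • a)) :=
    ((hGcont g).tendsto a).comp hu
  refine h1.congr fun η => ?_
  exact (smul_comm η g u).symm

theorem aux_prec_smul (hGcont : ∀ g : G, Continuous (fun x : X => g • x))
    {a b : X} (g : G) (h : precRel X a b) : precRel X (g • a) (g • b) := by
  obtain ⟨ha, hb, u, hu, hu'⟩ := h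
  refine ⟨aux_fixed_smul G ha g, aux_fixed_smul G hb g, g • u, ?_,
    aux_attract_smul G hGcont g hu'⟩
  exact map_mem_closure (hGcont g) hu fun v hv => aux_attract_smul G hGcont g hv

theorem aux_mk_eq {a b : X} : Quotient.mk (MulAction.orbitRel G X) a =
    Quotient.mk (MulAction.orbitRel G X) b ↔ ∃ g : G, g • b = a :=
  ⟨fun h => Quotient.exact h, fun h => Quotient.sound h⟩

theorem aux_open (hGcont : ∀ g : G, Continuous (fun x : X => g • x)) :
    IsOpenMap (Quotient.mk (MulAction.orbitRel G X)) := by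
  haveI : ContinuousConstSMul G X := ⟨hGcont⟩
  exact isOpenMap_quotient_mk'_mul

theorem aux_t2 [T2Space X] [Finite G] (hGcont : ∀ g : G, Continuous (fun x : X => g • x)) :
    T2Space (Quotient (MulAction.orbitRel G X)) := by
  refine ⟨fun p q => Quotient.inductionOn₂ p q fun a b hab => ?_⟩
  have key : ∀ g : G, ∃ U V : Set X, IsOpen U ∧ IsOpen V ∧ a ∈ U ∧ b ∈ V ∧
      ∀ u ∈ U, ∀ v ∈ V, g • v ≠ u := by
    intro g
    have hne : a ≠ g • b := fun h => hab ((aux_mk_eq G).2 ⟨g, h.symm⟩)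
    obtain ⟨U, V, hU, hV, haU, hbV, hd⟩ := t2_separation hne
    refine ⟨U, (fun x => g • x) ⁻¹' V, hU, hV.preimage (hGcont g), haU, hbV, ?_⟩
    intro u hu v hv h
    exact Set.disjoint_left.1 hd hu (h ▸ hv)
  choose U V hU hV haU hbV hd using key
  refine ⟨_, _, aux_open G hGcont _ (isOpen_iInter_of_finite hU),
    aux_open G hGcont _ (isOpen_iInter_of_finite hV),
    ⟨a, Set.mem_iInter.2 haU, rfl⟩, ⟨b, Set.mem_iInter.2 hbV, rfl⟩, ?_⟩
  rw [Set.disjoint_left]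
  rintro _ ⟨u, hu, rfl⟩ ⟨v, hv, h⟩
  obtain ⟨g, hg⟩ := (aux_mk_eq G).1 h.symm
  exact hd g u (Set.mem_iInter.1 hu g) v (Set.mem_iInter.1 hv g) hg

theorem aux_attract_mk {a u : X} (h : u ∈ attractSet X a) :
    Quotient.mk (MulAction.orbitRel G X) u ∈
      qAttract G (Quotient.mk (MulAction.orbitRel G X) a) :=
  (continuous_quotient_mk'.tendsto a).comp h

theorem aux_fixed_mk {a : X} (h : IsCFixed a) :
    qIsFixed G (Quotient.mk (MulAction.orbitRel G X) a) := fun η =>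
  congrArg (Quotient.mk (MulAction.orbitRel G X)) (h η)

theorem aux_attract_lift [T2Space X] [Finite G]
    (hGcont : ∀ g : G, Continuous (fun x : X => g • x))
    (hfiltr : ∀ x : X, ∃ x₀ : X, IsCFixed x₀ ∧ x ∈ attractSet X x₀) {a u : X}
    (h : Quotient.mk (MulAction.orbitRel G X) u ∈
      qAttract G (Quotient.mk (MulAction.orbitRel G X) a)) :
    ∃ g : G, u ∈ attractSet X (g • a) := by
  obtain ⟨p, _, hp⟩ := hfiltr u
  haveI := aux_t2 G hGcont
  haveI := aux_zeroFilter_neBot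
  obtain ⟨g, hg⟩ := (aux_mk_eq G).1 (tendsto_nhds_unique (aux_attract_mk G hp) h)
  exact ⟨g, hg ▸ hp⟩

theorem aux_fixed_lift [T2Space X] [Finite G]
    (hGcont : ∀ g : G, Continuous (fun x : X => g • x))
    (hfiltr : ∀ x : X, ∃ x₀ : X, IsCFixed x₀ ∧ x ∈ attractSet X x₀) {a : X}
    (h : qIsFixed G (Quotient.mk (MulAction.orbitRel G X) a)) : IsCFixed a := by
  obtain ⟨p, hpf, hp⟩ := hfiltr a
  haveI := aux_t2 G hGcont
  haveI := aux_zeroFilter_neBot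
  have h1 : Tendsto (fun η : ℂˣ => qsmul G η (Quotient.mk (MulAction.orbitRel G X) a))
      zeroFilter (𝓝 (Quotient.mk (MulAction.orbitRel G X) a)) :=
    tendsto_const_nhds.congr fun η => (h η).symm
  obtain ⟨g, hg⟩ := (aux_mk_eq G).1 (tendsto_nhds_unique h1 (aux_attract_mk G hp))
  exact hg ▸ aux_fixed_smul G hpf g

theorem aux_prec_lift [T2Space X] [Finite G]
    (hGcont : ∀ g : G, Continuous (fun x : X => g • x))
    (hfiltr : ∀ x : X, ∃ x₀ : X, IsCFixed x₀ ∧ x ∈ attractSet X x₀) {a b : X}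
    (h : qPrecRel G (Quotient.mk (MulAction.orbitRel G X) a)
      (Quotient.mk (MulAction.orbitRel G X) b)) : ∃ g : G, precRel X a (g • b) := by
  obtain ⟨ha, hb, y, hy, hy'⟩ := h
  obtain ⟨u, rfl⟩ := Quotient.exists_rep y
  have ha := aux_fixed_lift G hGcont hfiltr ha
  have hb := aux_fixed_lift G hGcont hfiltr hb
  obtain ⟨k, hk⟩ := aux_attract_lift G hGcont hfiltr hy'
  have h1 : u ∈ closure (⋃ g : G, attractSet X (g • a)) := by
    have h2 : u ∈ Quotient.mk (MulAction.orbitRel G X) ⁻¹'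
      closure (qAttract G (Quotient.mk (MulAction.orbitRel G X) a)) := hy
    rw [(aux_open G hGcont).preimage_closure_eq_closure_preimage continuous_quotient_mk'] at h2
    refine closure_mono ?_ h2
    intro v hv
    exact Set.mem_iUnion.2 (aux_attract_lift G hGcont hfiltr hv)
  rw [closure_iUnion_of_finite] at h1
  obtain ⟨g, hg⟩ := Set.mem_iUnion.1 h1
  have h3 : precRel X (g • a) (k • b) :=
    ⟨aux_fixed_smul G ha g, aux_fixed_smul G hb k, u, hg, hk⟩
  have h4 := aux_prec_smul G hGcont g⁻¹ h3
  rw [inv_smul_smul, smul_smul] at h4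
  exact ⟨_, h4⟩

theorem aux_prec_mk {a b : X} (h : precRel X a b) :
    qPrecRel G (Quotient.mk (MulAction.orbitRel G X) a)
      (Quotient.mk (MulAction.orbitRel G X) b) := by
  obtain ⟨ha, hb, u, hu, hu'⟩ := h
  exact ⟨aux_fixed_mk G ha, aux_fixed_mk G hb, Quotient.mk (MulAction.orbitRel G X) u,
    map_mem_closure continuous_quotient_mk' hu fun v hv => aux_attract_mk G hv,
    aux_attract_mk G hu'⟩

/-- Let `X` be Hausdorff with a continuous `ℂ*`-action having finitely many fixed
points and filtrable, and let a finite group `G` act on `X` by homeomorphisms,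
commuting with the `ℂ*`-action. Then for fixed points `x, x'` of `X`, the images in
`X/G` satisfy `π(x) ≺ π(x')` iff `x ≺ g·x'` for some `g ∈ G`. -/
theorem statement8 [T2Space X] [ContinuousSMul ℂˣ X] [Finite G]
    (hGcont : ∀ g : G, Continuous (fun x : X => g • x))
    (hfin : {x : X | IsCFixed x}.Finite)
    (hfiltr : ∀ x : X, ∃ x₀ : X, IsCFixed x₀ ∧ x ∈ attractSet X x₀)
    (x x' : X) (hx : IsCFixed x) (hx' : IsCFixed x') :
    Relation.ReflTransGen (qPrecRel G)
        (Quotient.mk (MulAction.orbitRel G X) x) (Quotient.mk (MulAction.orbitRel G X) x') ↔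
      ∃ g : G, Relation.ReflTransGen (precRel X) x (g • x') := by
  constructor
  · intro h
    have key : ∀ y, Relation.ReflTransGen (qPrecRel G)
        (Quotient.mk (MulAction.orbitRel G X) x) y →
        ∃ z, Quotient.mk (MulAction.orbitRel G X) z = y ∧
          Relation.ReflTransGen (precRel X) x z := by
      intro y hy
      induction hy with
      | refl => exact ⟨x, rfl, .refl⟩
      | @tail b c _ hbc ih =>
        obtain ⟨z, rfl, hz⟩ := ih
        obtain ⟨w, rfl⟩ := Quotient.exists_rep c
        obtain ⟨g, hg⟩ := aux_prec_lift G hGcont hfiltr hbc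
        exact ⟨g • w, (aux_mk_eq G).2 ⟨g, rfl⟩, hz.tail hg⟩
    obtain ⟨z, hz, hxz⟩ := key _ h
    obtain ⟨g, rfl⟩ := (aux_mk_eq G).1 hz
    exact ⟨g, hxz⟩
  · rintro ⟨g, hg⟩
    rw [← (aux_mk_eq G).2 (⟨g, rfl⟩ : ∃ k : G, k • x' = g • x')]
    exact hg.lift _ fun a b => aux_prec_mk G

end Quot
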